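/- arXiv:1903.08608 — 2 statements merged into one kernel-verified Lean document; each statement's English description precedes it below -/
import Mathlib

section
/- Assume at least one feasible association exists. Then the minimum average system delay over feasible associations, p* = min over feasible x of (Σ_{i ∈ L} λ_i T_i(x)) / (Σ_{i ∈ L} λ_i), satisfies p* = (q̂* − |B|) / (Σ_{i ∈ L} λ_i), where q̂* = min over feasible associations x of Σ_{j ∈ B} 1/(1 − ρ_j(x)). In particular, an association minimizes the average system delay if and only if it minimizes Σ_{j ∈ B} 1/(1 − ρ_j(x)) over feasible associations. (Equivalence of P_delay(2,K) and the load-based objective, from the proof of Theorem 3.) -/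
open Finset

/-- Load of base station `j` under association `x`: `ρ_j(x) = Σ_{i : x i = j} λ_i c_{ij}`. -/
noncomputable def bsLoad {L B : Type*} [Fintype L] [DecidableEq B] (lam : L → ℝ)
    (c : L → B → ℝ) (x : L → B) (j : B) : ℝ :=
  ∑ i ∈ univ.filter (fun i => x i = j), lam i * c i j

/-- Average delay of class `i` under association `x`: `T_i(x) = c_{i,x(i)} / (1 − ρ_{x(i)}(x))`. -/
noncomputable def classDelay {L B : Type*} [Fintype L] [DecidableEq B] (lam : L → ℝ)
    (c : L → B → ℝ) (x : L → B) (i : L) : ℝ :=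
  c i (x i) / (1 - bsLoad lam c x (x i))

/-- Maximum per-class delay `max_{i ∈ L} T_i(x)`. -/
noncomputable def maxDelay {L B : Type*} [Fintype L] [DecidableEq B] [Nonempty L]
    (lam : L → ℝ) (c : L → B → ℝ) (x : L → B) : ℝ :=
  univ.sup' univ_nonempty (fun i => classDelay lam c x i)

/-- Equivalence of `P_delay(2,K)` and the load-based objective (proof of Theorem 3):
the minimum average system delay `p*` over feasible associations satisfies
`p* = (q̂* − |B|) / Σ_i λ_i` where `q̂*` is the minimum over feasible associations of
`Σ_j 1/(1 − ρ_j)`; and a feasible association minimizes the average system delay iff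
it minimizes `Σ_j 1/(1 − ρ_j)`. -/
theorem stmt13 {L B : Type*} [Fintype L] [Fintype B] [DecidableEq B] [Nonempty L] [Nonempty B]
    (lam : L → ℝ) (hlam : ∀ i, 0 < lam i)
    (c : L → B → ℝ) (hc : ∀ i j, 0 < c i j)
    (ρbar : ℝ) (hρ0 : 0 < ρbar) (hρ1 : ρbar < 1)
    (hex : ∃ x : L → B, ∀ j : B, bsLoad lam c x j ≤ ρbar)
    (pstar qhat : ℝ)
    (hp : IsLeast {v : ℝ | ∃ x : L → B, (∀ j : B, bsLoad lam c x j ≤ ρbar) ∧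
      v = (∑ i : L, lam i * classDelay lam c x i) / (∑ i : L, lam i)} pstar)
    (hq : IsLeast {v : ℝ | ∃ x : L → B, (∀ j : B, bsLoad lam c x j ≤ ρbar) ∧
      v = ∑ j : B, 1 / (1 - bsLoad lam c x j)} qhat) :
    pstar = (qhat - (Fintype.card B : ℝ)) / (∑ i : L, lam i) ∧
      ∀ x : L → B, (∀ j : B, bsLoad lam c x j ≤ ρbar) →
        ((∑ i : L, lam i * classDelay lam c x i) / (∑ i : L, lam i) = pstar ↔
          (∑ j : B, 1 / (1 - bsLoad lam c x j)) = qhat) := by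
  have hS : 0 < ∑ i : L, lam i := Finset.sum_pos (fun i _ => hlam i) univ_nonempty
  have key : ∀ x : L → B, (∀ j : B, bsLoad lam c x j ≤ ρbar) →
      (∑ i : L, lam i * classDelay lam c x i)
        = (∑ j : B, 1 / (1 - bsLoad lam c x j)) - (Fintype.card B : ℝ) := by
    intro x hx
    have h1 : (∑ i : L, lam i * classDelay lam c x i)
        = ∑ j : B, bsLoad lam c x j / (1 - bsLoad lam c x j) := by
      rw [← Finset.sum_fiberwise (univ : Finset L) x]
      refine Finset.sum_congr rfl fun j _ => ?_
      conv_rhs => rw [bsLoad, Finset.sum_div]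
      refine Finset.sum_congr rfl fun i hi => ?_
      have hij : x i = j := (Finset.mem_filter.mp hi).2
      subst hij
      simp only [classDelay, bsLoad]
      rw [mul_div_assoc]
    have h2 : (Fintype.card B : ℝ) = ∑ _j : B, (1 : ℝ) := by simp
    rw [h1, h2, ← Finset.sum_sub_distrib]
    refine Finset.sum_congr rfl fun j _ => ?_
    have h3 : 1 - bsLoad lam c x j ≠ 0 := by
      have := hx j
      linarith
    rw [eq_sub_iff_add_eq, div_add_one h3]
    congr 1
    ring
  have main : pstar = (qhat - (Fintype.card B : ℝ)) / (∑ i : L, lam i) := by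
    obtain ⟨⟨x, hx, hxp⟩, hpl⟩ := hp
    obtain ⟨⟨y, hy, hyq⟩, hql⟩ := hq
    have a := hpl ⟨y, hy, rfl⟩
    have b := hql ⟨x, hx, rfl⟩
    rw [key y hy, ← hyq] at a
    rw [key x hx] at hxp
    apply le_antisymm a
    rw [hxp]
    exact div_le_div_of_nonneg_right (by linarith) hS.le
  refine ⟨main, fun x hx => ?_⟩
  rw [key x hx, main, div_left_inj' hS.ne', sub_left_inj]
end

section
/- Theorem 3 (relaxation lower bound): assume at least one feasible association exists, and let p* = min over feasible associations x of (Σ_{i ∈ L} λ_i T_i(x)) / (Σ_{i ∈ L} λ_i) be the minimum average system delay. Let q* be the infimum of Σ_{j ∈ B} 1/(1 − σ_j(y)) over all fractional associations y (functions y : L × B → [0,1] with Σ_{j ∈ B} y_{ij} = 1 for every i ∈ L) satisfying σ_j(y) ≤ ρ̄ for all j ∈ B, where σ_j(y) = Σ_{i ∈ L} y_{ij} λ_i c_{ij}. Then (q* − |B|) / (Σ_{i ∈ L} λ_i) ≤ p*. -/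
open Finset

/-- Load of base station `j` under a fractional association `y`:
`σ_j(y) = Σ_{i ∈ L} y_{ij} λ_i c_{ij}`. -/
noncomputable def frLoad {L B : Type*} [Fintype L] (lam : L → ℝ) (c : L → B → ℝ)
    (y : L → B → ℝ) (j : B) : ℝ :=
  ∑ i : L, y i j * (lam i * c i j)

/-- Theorem 3 (relaxation lower bound): the optimal value of the relaxed problem `Q_delay`
gives a lower bound on the minimum average system delay:
`(q* − |B|) / Σ_i λ_i ≤ p*`. -/
theorem stmt14 {L B : Type*} [Fintype L] [Fintype B] [DecidableEq B] [Nonempty L] [Nonempty B]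
    (lam : L → ℝ) (hlam : ∀ i, 0 < lam i)
    (c : L → B → ℝ) (hc : ∀ i j, 0 < c i j)
    (ρbar : ℝ) (hρ0 : 0 < ρbar) (hρ1 : ρbar < 1)
    (hex : ∃ x : L → B, ∀ j : B, bsLoad lam c x j ≤ ρbar)
    (pstar : ℝ)
    (hp : IsLeast {v : ℝ | ∃ x : L → B, (∀ j : B, bsLoad lam c x j ≤ ρbar) ∧
      v = (∑ i : L, lam i * classDelay lam c x i) / (∑ i : L, lam i)} pstar) :
    (sInf {v : ℝ | ∃ y : L → B → ℝ,
        (∀ i j, 0 ≤ y i j ∧ y i j ≤ 1) ∧ (∀ i : L, ∑ j : B, y i j = 1) ∧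
        (∀ j : B, frLoad lam c y j ≤ ρbar) ∧
        v = ∑ j : B, 1 / (1 - frLoad lam c y j)}
      - (Fintype.card B : ℝ)) / (∑ i : L, lam i) ≤ pstar := by
  obtain ⟨⟨x, hx, rfl⟩, -⟩ := hp
  have hS : 0 < ∑ i : L, lam i := Finset.sum_pos (fun i _ => hlam i) Finset.univ_nonempty
  refine div_le_div_of_nonneg_right ?_ hS.le
  have hfr : ∀ j, frLoad lam c (fun i j => if x i = j then (1 : ℝ) else 0) j
      = bsLoad lam c x j := by
    intro j
    simp [frLoad, bsLoad, Finset.sum_filter]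
  have hsum : ∑ i : L, lam i * classDelay lam c x i
      = ∑ j : B, 1 / (1 - bsLoad lam c x j) - (Fintype.card B : ℝ) := by
    have h1 : ∑ i : L, lam i * classDelay lam c x i
        = ∑ j : B, bsLoad lam c x j / (1 - bsLoad lam c x j) := by
      rw [← Finset.sum_fiberwise Finset.univ x]
      refine Finset.sum_congr rfl fun j _ => ?_
      conv_rhs => rw [bsLoad, Finset.sum_div]
      refine Finset.sum_congr rfl fun i hi => ?_
      have hij : x i = j := (Finset.mem_filter.mp hi).2
      subst hij
      rw [classDelay, mul_div_assoc]
      rfl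
    have h2 : (Fintype.card B : ℝ) = ∑ _j : B, (1 : ℝ) := by simp
    rw [h1, h2, ← Finset.sum_sub_distrib]
    refine Finset.sum_congr rfl fun j _ => ?_
    have : (1 - bsLoad lam c x j) ≠ 0 := by
      have := hx j
      exact ne_of_gt (by linarith)
    field_simp
    ring
  rw [hsum]
  refine sub_le_sub_right (csInf_le ?_ ?_) _
  · refine ⟨0, ?_⟩
    rintro v ⟨y, -, -, hy, rfl⟩
    refine Finset.sum_nonneg fun j _ => ?_
    have := hy j
    exact div_nonneg zero_le_one (by linarith)
  · refine ⟨fun i j => if x i = j then (1 : ℝ) else 0, ?_, ?_, ?_, ?_⟩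
    · intro i j
      dsimp only
      split_ifs <;> norm_num
    · intro i
      simp
    · intro j
      rw [hfr]
      exact hx j
    · simp only [hfr]
end
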